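/- Let (a_1, ..., a_n) be a sequence of positive integers with M(a_1, ..., a_n)^2 = −Id (a solution of Problem III). Then a_i ≤ n for every index i. -/

import Mathlib

open Matrix

def elemMat (a : ℤ) : Matrix (Fin 2) (Fin 2) ℤ := !![a, -1; 1, 0]

/-- `M (a₁ :: ... :: aₙ)` is the product `E(aₙ) ⋯ E(a₁)` with the factor for `a₁` rightmost. -/
def M : List ℤ → Matrix (Fin 2) (Fin 2) ℤ
  | [] => 1
  | a :: t => M t * elemMat a


theorem M_append (s t : List ℤ) : M (s ++ t) = M t * M s := by
  induction s with
  | nil => simp [M]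
  | cons a s ih => simp [M, ih, Matrix.mul_assoc]

theorem M_trace_rot (s t : List ℤ) : (M (s ++ t)).trace = (M (t ++ s)).trace := by
  rw [M_append, M_append, Matrix.trace_mul_comm]

theorem M_det (l : List ℤ) : (M l).det = 1 := by
  induction l with
  | nil => simp [M]
  | cons a s ih => simp [M, ih, elemMat, Matrix.det_fin_two]

theorem M_big (l : List ℤ) (h : ∀ x ∈ l, 2 ≤ x) :
    1 ≤ M l 0 0 ∧ 1 ≤ M l 0 0 + M l 0 1 ∧ 1 ≤ M l 0 0 - M l 1 0 ∧
    0 ≤ (M l 0 0 - M l 1 0) + (M l 0 1 - M l 1 1) ∧ 0 < (M l).trace := by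
  induction l with
  | nil => simp [M]
  | cons a t ih =>
    obtain ⟨h1, h2, h3, h4, -⟩ := ih (fun x hx => h x (by simp [hx]))
    have ha := h a (by simp)
    simp only [M, elemMat, Matrix.trace_fin_two, Matrix.mul_apply, Fin.sum_univ_two]
    simp
    generalize M t 0 0 = p at *
    generalize M t 0 1 = q at *
    generalize M t 1 0 = r at *
    generalize M t 1 1 = s at *
    have e1 : 0 ≤ p * (a - 2) := mul_nonneg (by linarith) (by linarith)
    have e2 : 0 ≤ (p - r) * (a - 2) := mul_nonneg (by linarith) (by linarith)
    refine ⟨?_, ?_, ?_, ?_, ?_⟩ <;> nlinarith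

theorem M_red1 (a b : ℤ) (m : List ℤ) :
    M (a :: 1 :: b :: m) = M ((a - 1) :: (b - 1) :: m) := by
  simp only [M, Matrix.mul_assoc]
  congr 1
  ext i j
  fin_cases i <;> fin_cases j <;> simp [elemMat] <;> ring

theorem M_red2 (a b : ℤ) (m : List ℤ) :
    M (a :: 1 :: 1 :: b :: m) = - M ((a + b - 1) :: m) := by
  simp only [M, Matrix.mul_assoc]
  rw [← Matrix.mul_neg]
  congr 1
  ext i j
  fin_cases i <;> fin_cases j <;> simp [elemMat] <;> ring

theorem bound_aux (n : ℕ) : ∀ l : List ℤ, l.length = n → (∀ x ∈ l, 0 < x) →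
    (M l).trace = 0 → ∀ x ∈ l, x ≤ (n : ℤ) := by
  induction n using Nat.strong_induction_on with
  | _ n IH =>
  -- the reduction step when two adjacent ones occur
  have two : ∀ (a b : ℤ) (m : List ℤ), m.length + 4 = n → 0 < a → 0 < b →
      (∀ x ∈ m, 0 < x) → (M (a :: 1 :: 1 :: b :: m)).trace = 0 →
      a ≤ n ∧ b ≤ n ∧ ∀ x ∈ m, x ≤ (n : ℤ) := by
    intro a b m hn ha hb hm ht
    rw [M_red2, Matrix.trace_neg, neg_eq_zero] at ht
    have := IH (m.length + 1) (by omega) ((a + b - 1) :: m) (by simp)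
      (by
        intro x hx
        rcases List.mem_cons.1 hx with rfl | hx
        · omega
        · exact hm x hx) ht
    have h0 := this (a + b - 1) (by simp)
    refine ⟨by omega, by omega, fun x hx => ?_⟩
    have := this x (by simp [hx])
    omega
  intro l hl hpos ht
  have h1 : (1 : ℤ) ∈ l := by
    by_contra hc
    have := (M_big l (fun x hx => by
      have h0 := hpos x hx
      have : x ≠ 1 := fun e => hc (e ▸ hx)
      omega)).2.2.2.2
    omega
  obtain ⟨s, t, rfl⟩ := List.append_of_mem h1
  rw [M_trace_rot] at ht
  have hmem : ∀ x, x ∈ s ++ 1 :: t ↔ x = 1 ∨ x ∈ t ++ s := by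
    intro x; simp; tauto
  simp only [hmem] at hpos ⊢
  have hlen : (t ++ s).length + 1 = n := by simp at hl ⊢; omega
  rw [List.cons_append] at ht
  generalize t ++ s = r at *
  clear hmem h1 hl
  rcases r with _ | ⟨b, r⟩
  · simp at hlen ⊢; omega
  rcases List.eq_nil_or_concat r with rfl | ⟨m, a, rfl⟩
  · simp [M, elemMat, Matrix.trace_fin_two] at ht
    simp at hlen ⊢; omega
  rw [List.concat_eq_append] at *
  have ht' : (M (a :: 1 :: b :: m)).trace = 0 := by
    have := M_trace_rot [a] (1 :: b :: m)
    simp only [List.cons_append, List.nil_append] at this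
    rw [this]; exact ht
  have hn : m.length + 3 = n := by simp at hlen; omega
  have ha : 0 < a := hpos a (by simp)
  have hb : 0 < b := hpos b (by simp)
  have hm : ∀ x ∈ m, 0 < x := fun x hx => hpos x (by simp [hx])
  suffices H : a ≤ n ∧ b ≤ n ∧ ∀ x ∈ m, x ≤ (n : ℤ) by
    intro x hx
    simp at hx
    rcases hx with rfl | rfl | hx | rfl
    · omega
    · exact H.2.1
    · exact H.2.2 x hx
    · exact H.1
  clear hpos ht hlen
  by_cases hb1 : b = 1
  · subst hb1
    rcases m with _ | ⟨c, m⟩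
    · simp [M, elemMat, Matrix.trace_fin_two] at ht'
      try omega
    · have := two a c m (by simp at hn; omega) ha (hm c (by simp))
        (fun x hx => hm x (by simp [hx])) ht'
      refine ⟨this.1, by omega, fun x hx => ?_⟩
      rcases List.mem_cons.1 hx with rfl | hx
      · exact this.2.1
      · exact this.2.2 x hx
  by_cases ha1 : a = 1
  · subst ha1
    rcases List.eq_nil_or_concat m with rfl | ⟨m, d, rfl⟩
    · simp [M, elemMat, Matrix.trace_fin_two] at ht'
      try omega
    · rw [List.concat_eq_append] at *
      have e := M_trace_rot [d] (1 :: 1 :: b :: m)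
      simp only [List.cons_append, List.nil_append] at e
      have := two d b m (by simp at hn; omega) (hm d (by simp)) hb
        (fun x hx => hm x (by simp [hx])) (e.trans ht')
      refine ⟨by omega, this.2.1, fun x hx => ?_⟩
      simp at hx
      rcases hx with hx | rfl
      · exact this.2.2 x hx
      · exact this.1
  rw [M_red1] at ht'
  have := IH (m.length + 2) (by omega) _ (by simp)
    (by
      intro x hx
      simp at hx
      rcases hx with rfl | rfl | hx
      · omega
      · omega
      · exact hm x hx) ht'
  have p1 := this (a - 1) (by simp)
  have p2 := this (b - 1) (by simp)
  refine ⟨by omega, by omega, fun x hx => ?_⟩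
  have := this x (by simp [hx])
  omega

/-- For a solution of Problem III, every entry satisfies `aᵢ ≤ n`. -/
theorem problemIII_entry_bound (l : List ℤ) (hpos : ∀ x ∈ l, 0 < x)
    (h : (M l) ^ 2 = -1) :
    ∀ x ∈ l, x ≤ (l.length : ℤ) := by
  refine bound_aux l.length l rfl hpos ?_
  have hd := M_det l
  rw [Matrix.det_fin_two] at hd
  have e0 := congrFun (congrFun h 0) 0
  have e1 := congrFun (congrFun h 0) 1
  have e2 := congrFun (congrFun h 1) 0
  have e3 := congrFun (congrFun h 1) 1
  simp [pow_two, Matrix.mul_apply, Fin.sum_univ_two] at e0 e1 e2 e3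
  rw [Matrix.trace_fin_two]
  generalize M l 0 0 = p at *
  generalize M l 0 1 = q at *
  generalize M l 1 0 = r at *
  generalize M l 1 1 = s at *
  have : (p + s) ^ 2 = 0 := by nlinarith
  exact pow_eq_zero_iff (two_ne_zero) |>.1 this
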